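/- Let E be a real inner product space, let (u_ν)_{ν ∈ Fin K} be an orthonormal family in E, let p : Fin N → E be N points with ‖p_i‖ ≤ 1 for all i, let ν★ : Fin N → Fin K assign to each point a dominant frequency, and let δ : Fin N → ℝ with δ_i > 0 satisfy ⟨u_{ν★(i)}, p_i⟩² − ⟨u_ν, p_i⟩² ≥ δ_i for all i and all ν ≠ ν★(i). Let Δ : Fin N → E be a perturbation and set R := (∑_i ‖Δ_i‖²)^{1/2}. If 2R + R² < δ_i/2 for every i, then for every i and every ν ≠ ν★(i), ⟨u_{ν★(i)}, p_i + Δ_i⟩² > ⟨u_ν, p_i + Δ_i⟩²; i.e., no point's dominant frequency changes. -/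

import Mathlib

open InnerProductSpace

/-- Perturbing a point of the unit ball by at most `r` changes its energy along a unit vector
by at most `2 * r + r ^ 2`. -/
theorem abs_inner_add_sq_sub_inner_sq_le {E : Type*} [NormedAddCommGroup E]
    [InnerProductSpace ℝ E] {v x d : E} {r : ℝ} (hv : ‖v‖ = 1) (hx : ‖x‖ ≤ 1) (hd : ‖d‖ ≤ r) :
    |⟪v, x + d⟫_ℝ ^ 2 - ⟪v, x⟫_ℝ ^ 2| ≤ 2 * r + r ^ 2 := by
  have hvx : |⟪v, x⟫_ℝ| ≤ 1 := (abs_real_inner_le_norm v x).trans (by rwa [hv, one_mul])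
  have hvd : |⟪v, d⟫_ℝ| ≤ r := (abs_real_inner_le_norm v d).trans (by rwa [hv, one_mul])
  have hmul : |⟪v, x⟫_ℝ * ⟪v, d⟫_ℝ| ≤ 1 * r := by
    rw [abs_mul]
    gcongr
  have hsq : ⟪v, d⟫_ℝ ^ 2 ≤ r ^ 2 := sq_le_sq' (abs_le.1 hvd).1 (abs_le.1 hvd).2
  rw [inner_add_right, abs_le]
  constructor <;> nlinarith [abs_le.1 hmul, sq_nonneg ⟪v, d⟫_ℝ]

/-- Each row of a family is bounded by its Frobenius norm. -/
theorem norm_le_sqrt_sum_norm_sq {ι E : Type*} [Fintype ι] [SeminormedAddCommGroup E]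
    (f : ι → E) (i : ι) : ‖f i‖ ≤ Real.sqrt (∑ j, ‖f j‖ ^ 2) :=
  Real.le_sqrt_of_sq_le <|
    Finset.single_le_sum (f := fun j => ‖f j‖ ^ 2) (fun _ _ => by positivity) (Finset.mem_univ i)

theorem slice_stability {E : Type*} [NormedAddCommGroup E] [InnerProductSpace ℝ E]
    (K N : ℕ) (u : Fin K → E) (hu : Orthonormal ℝ u)
    (p : Fin N → E) (hp : ∀ i, ‖p i‖ ≤ 1)
    (νstar : Fin N → Fin K) (δ : Fin N → ℝ) (hδ : ∀ i, 0 < δ i)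
    (hgap : ∀ i, ∀ ν : Fin K, ν ≠ νstar i →
      δ i ≤ ⟪u (νstar i), p i⟫_ℝ ^ 2 - ⟪u ν, p i⟫_ℝ ^ 2)
    (Δ : Fin N → E)
    (hR : ∀ i, 2 * Real.sqrt (∑ j, ‖Δ j‖ ^ 2) + Real.sqrt (∑ j, ‖Δ j‖ ^ 2) ^ 2
        < δ i / 2) :
    ∀ i, ∀ ν : Fin K, ν ≠ νstar i →
      ⟪u ν, p i + Δ i⟫_ℝ ^ 2 < ⟪u (νstar i), p i + Δ i⟫_ℝ ^ 2 := by
  intro i ν hν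
  have hd := norm_le_sqrt_sum_norm_sq Δ i
  have hstar := abs_le.1 (abs_inner_add_sq_sub_inner_sq_le (hu.1 (νstar i)) (hp i) hd)
  have hother := abs_le.1 (abs_inner_add_sq_sub_inner_sq_le (hu.1 ν) (hp i) hd)
  linarith [hgap i ν hν, hR i, hstar.1, hother.2]
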